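/- arXiv:0906.2369 — 2 statements merged into one kernel-verified Lean document; each statement's English description precedes it below -/
import Mathlib

section
/- B(qaH, Rec, qaH) ⊄ l-TOP: there exists a quasi-alphabetic relation not computable by any linear top-down tree transducer. Concretely, with Σ = {f/2, e/0} and V = {v_1, v_2}, the single-pair relation {(f(v_1, v_2), e)} is a quasi-alphabetic relation but is not in l-TOP. -/
/-!
The pair `(f(v₁, v₂), e)` is produced by a bimorphism whose center alphabet is a single nullary
symbol, mapped to `f(v₁, v₂)` on the left and to `e` on the right; the leaves `v₁, v₂` sit
inside the image of that symbol.

A top-down transducer cannot check both leaves. If a rule applied at the root of `f(t₁, t₂)` leads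
to the output `e`, its right-hand side is either a single call `q'(xᵢ)` or the tree `e` itself, so
it visits at most one of the two subtrees. Without look-ahead the other subtree is arbitrary
(`TDTT.Run.exists_unvisited`), so a transducer translating `f(v₁, v₂)` to `e` also translates some
other tree to `e`.
-/

set_option autoImplicit false

inductive RTree (S : Type) (V : Type) (rk : S → ℕ) : Type
  | leaf : V → RTree S V rk
  | node : (f : S) → (Fin (rk f) → RTree S V rk) → RTree S V rk

namespace RTree

variable {S V D Y β : Type} {rkS : S → ℕ} {rkD : D → ℕ}

def height : RTree S V rkS → ℕ
  | leaf _ => 0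
  | node _ c => Finset.univ.sup fun i => (c i).height + 1

def yield : RTree S V rkS → List V
  | leaf v => [v]
  | node _ c => (List.ofFn fun i => (c i).yield).flatten

def subst : RTree D (Y ⊕ β) rkD → (β → RTree D Y rkD) → RTree D Y rkD
  | leaf (Sum.inl y), _ => leaf y
  | leaf (Sum.inr b), σ => σ b
  | node f c, σ => node f fun i => (c i).subst σ

def ivars : RTree D (Y ⊕ β) rkD → Multiset β
  | leaf (Sum.inl _) => 0
  | leaf (Sum.inr b) => {b}
  | node _ c => ∑ i, (c i).ivars

def Shallow : RTree S V rkS → Prop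
  | leaf _ => False
  | node _ c => ∀ i, ∃ v, c i = leaf v

def VarShallow : RTree D (Y ⊕ β) rkD → Prop
  | leaf _ => False
  | node _ c => ∀ i, ∃ b, c i = leaf (Sum.inr b)

end RTree

/-- A tree homomorphism `φ : T_S(V) → T_D(Y)`, given by a map on leaves and a
map sending each symbol `f` of rank `k` to a tree over `D` with leaves in `Y ⊕ X_k`. -/
structure TreeHom (S V : Type) (rkS : S → ℕ) (D Y : Type) (rkD : D → ℕ) where
  leafMap : V → RTree D Y rkD
  symMap : (f : S) → RTree D (Y ⊕ Fin (rkS f)) rkD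

namespace TreeHom

variable {S V D Y : Type} {rkS : S → ℕ} {rkD : D → ℕ}

/-- Application of a tree homomorphism: `f(t₁,…,t_k)φ = φ_k(f)[t₁φ,…,t_kφ]`. -/
def apply (φ : TreeHom S V rkS D Y rkD) : RTree S V rkS → RTree D Y rkD
  | .leaf v => φ.leafMap v
  | .node f c => (φ.symMap f).subst fun i => φ.apply (c i)

/-- Linear: every variable occurs at most once in each `φ_k(f)`. -/
def Linear (φ : TreeHom S V rkS D Y rkD) : Prop := ∀ f, (φ.symMap f).ivars.Nodup

/-- Complete (nondeleting): every variable of `X_k` occurs at least once in `φ_k(f)`. -/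
def Complete (φ : TreeHom S V rkS D Y rkD) : Prop :=
  ∀ f, ∀ i : Fin (rkS f), i ∈ (φ.symMap f).ivars

/-- `φ_V(v) ∈ Y` for every leaf symbol `v`. -/
def LeafToLeaf (φ : TreeHom S V rkS D Y rkD) : Prop := ∀ v, ∃ y, φ.leafMap v = .leaf y

/-- Symbol-to-symbol: leaves go to leaves and `φ_k(f) ∈ D(X_k)`. -/
def SymbolToSymbol (φ : TreeHom S V rkS D Y rkD) : Prop :=
  φ.LeafToLeaf ∧ ∀ f, (φ.symMap f).VarShallow

/-- Quasi-alphabetic: linear, complete, leaves to leaves, and `φ_k(f) ∈ D(Y ∪ X_k)`. -/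
def QuasiAlphabetic (φ : TreeHom S V rkS D Y rkD) : Prop :=
  φ.Linear ∧ φ.Complete ∧ φ.LeafToLeaf ∧ ∀ f, (φ.symMap f).Shallow

/-- Alphabetic: linear, leaves to leaves, and `φ_k(f) ∈ X_k ∪ D(X_k)`. -/
def Alphabetic (φ : TreeHom S V rkS D Y rkD) : Prop :=
  φ.Linear ∧ φ.LeafToLeaf ∧
    ∀ f, (∃ j, φ.symMap f = .leaf (Sum.inr j)) ∨ (φ.symMap f).VarShallow

/-- Strictly alphabetic: complete, alphabetic, and symbol-to-symbol. -/
def StrictlyAlphabetic (φ : TreeHom S V rkS D Y rkD) : Prop :=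
  φ.Complete ∧ φ.Alphabetic ∧ φ.SymbolToSymbol

end TreeHom

/-- A finite-state (bottom-up/top-down) tree automaton. -/
structure FTA (S V : Type) (rk : S → ℕ) where
  Q : Type
  [finQ : Fintype Q]
  final : Set Q
  leafTrans : Q → V → Prop
  nodeTrans : (q : Q) → (f : S) → (Fin (rk f) → Q) → Prop

/-- Acceptance of a tree in a state of a finite-state tree automaton. -/
inductive FTA.Reach {S V : Type} {rk : S → ℕ} (A : FTA S V rk) : A.Q → RTree S V rk → Prop
  | leaf {q v} : A.leafTrans q v → FTA.Reach A q (RTree.leaf v)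
  | node {q f qs c} : A.nodeTrans q f qs → (∀ i, FTA.Reach A (qs i) (c i)) →
      FTA.Reach A q (RTree.node f c)

/-- A tree language is recognizable if it is accepted by a finite-state tree automaton. -/
def Recognizable {S V : Type} {rk : S → ℕ} (L : Set (RTree S V rk)) : Prop :=
  ∃ A : FTA S V rk, L = { t | ∃ q ∈ A.final, A.Reach q t }

/-- A class of tree homomorphisms (for every choice of alphabets). -/
abbrev HomClass : Type 1 :=
  ∀ (G Z : Type) (rkG : G → ℕ) (D Y : Type) (rkD : D → ℕ), TreeHom G Z rkG D Y rkD → Prop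

/-- `InBim P Q τ` states that the tree transformation `τ` is defined by a bimorphism
`(φ, L, ψ)` with `φ ∈ P`, `ψ ∈ Q` and `L` a recognizable tree language (over a finite
center alphabet). -/
def InBim {S V D Y : Type} {rkS : S → ℕ} {rkD : D → ℕ} (P Qc : HomClass)
    (τ : Set (RTree S V rkS × RTree D Y rkD)) : Prop :=
  ∃ (G Z : Type) (rkG : G → ℕ) (_ : Fintype G) (_ : Fintype Z)
    (φ : TreeHom G Z rkG S V rkS) (ψ : TreeHom G Z rkG D Y rkD) (L : Set (RTree G Z rkG)),
      P G Z rkG S V rkS φ ∧ Qc G Z rkG D Y rkD ψ ∧ Recognizable L ∧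
      τ = { p | ∃ t ∈ L, p = (φ.apply t, ψ.apply t) }

/-- The class of quasi-alphabetic tree homomorphisms. -/
def qaHC : HomClass := fun _ _ _ _ _ _ φ => φ.QuasiAlphabetic

/-- The class of alphabetic tree homomorphisms. -/
def aHC : HomClass := fun _ _ _ _ _ _ φ => φ.Alphabetic

/-- The class of strictly alphabetic tree homomorphisms. -/
def saHC : HomClass := fun _ _ _ _ _ _ φ => φ.StrictlyAlphabetic

/-- The class of linear tree homomorphisms. -/
def lHC : HomClass := fun _ _ _ _ _ _ φ => φ.Linear

/-- The class of all tree homomorphisms. -/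
def allHC : HomClass := fun _ _ _ _ _ _ _ => True

/-- A quasi-alphabetic relation: a tree transformation defined by a quasi-alphabetic
tree bimorphism. -/
def IsQARel {S V D Y : Type} {rkS : S → ℕ} {rkD : D → ℕ}
    (τ : Set (RTree S V rkS × RTree D Y rkD)) : Prop :=
  InBim qaHC qaHC τ
/-- Rank-`k` symbols of the product alphabet `[S × D]`: shallow contexts in
`S(V ∪ X_k) ∩ C^k_S(V)`. -/
def ShallowCtx (S V : Type) (rk : S → ℕ) (k : ℕ) : Type :=
  { t : RTree S (V ⊕ Fin k) rk // t.Shallow ∧ ∀ j : Fin k, t.ivars.count j = 1 }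

/-- The product ranked alphabet `[S × D]`. -/
def ProdSym (S V : Type) (rkS : S → ℕ) (D Y : Type) (rkD : D → ℕ) : Type :=
  Σ k : ℕ, ShallowCtx S V rkS k × ShallowCtx D Y rkD k

/-- The rank of a symbol of `[S × D]`. -/
def prodRk {S V : Type} {rkS : S → ℕ} {D Y : Type} {rkD : D → ℕ} :
    ProdSym S V rkS D Y rkD → ℕ := Sigma.fst

/-- The first canonical projection homomorphism `ρ¹ : T_{[S×D]}(V × Y) → T_S(V)`. -/
def rho1 (S V : Type) (rkS : S → ℕ) (D Y : Type) (rkD : D → ℕ) :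
    TreeHom (ProdSym S V rkS D Y rkD) (V × Y) prodRk S V rkS where
  leafMap p := RTree.leaf p.1
  symMap s := s.2.1.val

/-- The second canonical projection homomorphism `ρ² : T_{[S×D]}(V × Y) → T_D(Y)`. -/
def rho2 (S V : Type) (rkS : S → ℕ) (D Y : Type) (rkD : D → ℕ) :
    TreeHom (ProdSym S V rkS D Y rkD) (V × Y) prodRk D Y rkD where
  leafMap p := RTree.leaf p.2
  symMap s := s.2.2.val
/-- A finite-state relabeling: rules `q(f(x₁,…,x_k)) → g(q₁(x₁),…,q_k(x_k))`
with `f ∈ S_k`, `g ∈ D_k` (and analogous rules relabeling leaves). -/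
structure Relabeling (S V : Type) (rkS : S → ℕ) (D Y : Type) (rkD : D → ℕ) where
  Q : Type
  [finQ : Fintype Q]
  final : Set Q
  leafRule : Q → V → Y → Prop
  nodeRule : (q : Q) → (f : S) → (g : D) → rkD g = rkS f → (Fin (rkS f) → Q) → Prop

/-- Runs of a finite-state relabeling. -/
inductive Relabeling.Run {S V D Y : Type} {rkS : S → ℕ} {rkD : D → ℕ}
    (M : Relabeling S V rkS D Y rkD) : M.Q → RTree S V rkS → RTree D Y rkD → Prop
  | leaf {q v y} : M.leafRule q v y → Relabeling.Run M q (RTree.leaf v) (RTree.leaf y)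
  | node {q f g} (h : rkD g = rkS f) {qs : Fin (rkS f) → M.Q}
      {c : Fin (rkS f) → RTree S V rkS} {c' : Fin (rkD g) → RTree D Y rkD} :
      M.nodeRule q f g h qs →
      (∀ i : Fin (rkS f), Relabeling.Run M (qs i) (c i) (c' (Fin.cast h.symm i))) →
      Relabeling.Run M q (RTree.node f c) (RTree.node g c')

/-- The tree transformation computed by a finite-state relabeling. -/
def Relabeling.rel {S V D Y : Type} {rkS : S → ℕ} {rkD : D → ℕ}
    (M : Relabeling S V rkS D Y rkD) : Set (RTree S V rkS × RTree D Y rkD) :=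
  { p | ∃ q ∈ M.final, M.Run q p.1 p.2 }

/-- A rule `q(f(x₁,…,x_k)) → r` of a top-down tree transducer, together with its
look-ahead language `la`.  The right-hand side `r` is a tree over the output alphabet
whose leaves are either output leaf symbols or pairs `(q', x_i)`. -/
structure TDRule (Q S V : Type) (rkS : S → ℕ) (D Y : Type) (rkD : D → ℕ) where
  st : Q
  sym : S
  rhs : RTree D (Y ⊕ (Q × Fin (rkS sym))) rkD
  la : Set (RTree S V rkS)

/-- A rule `q(v) → r` of a top-down tree transducer for an input leaf `v`. -/
structure TDLeafRule (Q S V : Type) (rkS : S → ℕ) (D Y : Type) (rkD : D → ℕ) where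
  st : Q
  lv : V
  rhs : RTree D Y rkD
  la : Set (RTree S V rkS)

/-- A top-down tree transducer (with look-ahead): finitely many states,
a set of final states and finitely many rules (each carrying a look-ahead language;
transducers without look-ahead have all look-ahead languages equal to `Set.univ`). -/
structure TDTT (S V : Type) (rkS : S → ℕ) (D Y : Type) (rkD : D → ℕ) where
  Q : Type
  [finQ : Fintype Q]
  final : Set Q
  rules : Set (TDRule Q S V rkS D Y rkD)
  leafRules : Set (TDLeafRule Q S V rkS D Y rkD)
  rules_finite : rules.Finite
  leafRules_finite : leafRules.Finite

/-- Runs of a top-down tree transducer with look-ahead. -/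
inductive TDTT.Run {S V D Y : Type} {rkS : S → ℕ} {rkD : D → ℕ}
    (M : TDTT S V rkS D Y rkD) : M.Q → RTree S V rkS → RTree D Y rkD → Prop
  | leaf {r : TDLeafRule M.Q S V rkS D Y rkD} :
      r ∈ M.leafRules → RTree.leaf r.lv ∈ r.la →
      TDTT.Run M r.st (RTree.leaf r.lv) r.rhs
  | node {r : TDRule M.Q S V rkS D Y rkD} {c : Fin (rkS r.sym) → RTree S V rkS}
      (σ : M.Q × Fin (rkS r.sym) → RTree D Y rkD) :
      r ∈ M.rules → RTree.node r.sym c ∈ r.la →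
      (∀ p ∈ r.rhs.ivars, TDTT.Run M p.1 (c p.2) (σ p)) →
      TDTT.Run M r.st (RTree.node r.sym c) (r.rhs.subst σ)

/-- The tree transformation computed by a top-down tree transducer. -/
def TDTT.rel {S V D Y : Type} {rkS : S → ℕ} {rkD : D → ℕ}
    (M : TDTT S V rkS D Y rkD) : Set (RTree S V rkS × RTree D Y rkD) :=
  { p | ∃ q ∈ M.final, M.Run q p.1 p.2 }

/-- Linear: every variable occurs at most once in the right-hand side of each rule. -/
def TDTT.Linear {S V D Y : Type} {rkS : S → ℕ} {rkD : D → ℕ}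
    (M : TDTT S V rkS D Y rkD) : Prop :=
  ∀ r ∈ M.rules, (Multiset.map Prod.snd r.rhs.ivars).Nodup

/-- Nondeleting: every variable occurs at least once in the right-hand side of each rule. -/
def TDTT.Nondeleting {S V D Y : Type} {rkS : S → ℕ} {rkD : D → ℕ}
    (M : TDTT S V rkS D Y rkD) : Prop :=
  ∀ r ∈ M.rules, ∀ i : Fin (rkS r.sym), i ∈ Multiset.map Prod.snd r.rhs.ivars

/-- No look-ahead: all look-ahead languages are trivial. -/
def TDTT.NoLookahead {S V D Y : Type} {rkS : S → ℕ} {rkD : D → ℕ}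
    (M : TDTT S V rkS D Y rkD) : Prop :=
  (∀ r ∈ M.rules, r.la = Set.univ) ∧ (∀ r ∈ M.leafRules, r.la = Set.univ)

/-- A language of the form `L[T_S,…,T_S]` for a finite tree language `L ⊆ T_S(X)`. -/
def PatternLang {S V : Type} {rkS : S → ℕ} (la : Set (RTree S V rkS)) : Prop :=
  ∃ (n : ℕ) (P : Finset (RTree S (V ⊕ Fin n) rkS)),
    la = { t | ∃ p ∈ P, ∃ σ : Fin n → RTree S V rkS, t = RTree.subst p σ }

/-- Finite look-ahead. -/
def TDTT.FiniteLookahead {S V D Y : Type} {rkS : S → ℕ} {rkD : D → ℕ}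
    (M : TDTT S V rkS D Y rkD) : Prop :=
  (∀ r ∈ M.rules, PatternLang r.la) ∧ (∀ r ∈ M.leafRules, PatternLang r.la)

/-- Regular look-ahead. -/
def TDTT.RegularLookahead {S V D Y : Type} {rkS : S → ℕ} {rkD : D → ℕ}
    (M : TDTT S V rkS D Y rkD) : Prop :=
  (∀ r ∈ M.rules, Recognizable r.la) ∧ (∀ r ∈ M.leafRules, Recognizable r.la)
/-- A context-free tree grammar over terminal ranked alphabet `S` and leaf alphabet `V`:
ranked nonterminals `N` with a nullary start nonterminal, and finitely many productions
`A(x₁,…,x_k) → t` with `t ∈ T_{S∪N}(V ∪ X_k)`. -/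
structure CFTG (S V : Type) (rkS : S → ℕ) where
  N : Type
  rkN : N → ℕ
  [finN : Fintype N]
  start : N
  start_rank : rkN start = 0
  prods : Set ((A : N) × RTree (S ⊕ N) (V ⊕ Fin (rkN A)) (Sum.elim rkS rkN))
  prods_finite : prods.Finite

/-- Embedding of terminal trees into trees over the extended alphabet `S ∪ N`. -/
def embedCFT {S V : Type} {rkS : S → ℕ} {N : Type} {rkN : N → ℕ} :
    RTree S V rkS → RTree (S ⊕ N) V (Sum.elim rkS rkN)
  | .leaf v => .leaf v
  | .node f c => .node (Sum.inl f) fun i => embedCFT (c i)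

/-- One-step rewriting of sentential forms of a context-free tree grammar. -/
inductive CFTG.Rw {S V : Type} {rkS : S → ℕ} (G : CFTG S V rkS) :
    RTree (S ⊕ G.N) V (Sum.elim rkS G.rkN) → RTree (S ⊕ G.N) V (Sum.elim rkS G.rkN) → Prop
  | rule {A : G.N} {rhs : RTree (S ⊕ G.N) (V ⊕ Fin (G.rkN A)) (Sum.elim rkS G.rkN)}
      (h : (⟨A, rhs⟩ : (B : G.N) × RTree (S ⊕ G.N) (V ⊕ Fin (G.rkN B)) (Sum.elim rkS G.rkN)) ∈ G.prods)
      (c : Fin (G.rkN A) → RTree (S ⊕ G.N) V (Sum.elim rkS G.rkN)) :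
      CFTG.Rw G (RTree.node (Sum.inr A) c) (rhs.subst c)
  | congr {f : S ⊕ G.N} {c : Fin (Sum.elim rkS G.rkN f) → RTree (S ⊕ G.N) V (Sum.elim rkS G.rkN)}
      {i : Fin (Sum.elim rkS G.rkN f)} {t'} :
      CFTG.Rw G (c i) t' → CFTG.Rw G (RTree.node f c) (RTree.node f (Function.update c i t'))

/-- The sentential form consisting of the start nonterminal. -/
def CFTG.startTree {S V : Type} {rkS : S → ℕ} (G : CFTG S V rkS) :
    RTree (S ⊕ G.N) V (Sum.elim rkS G.rkN) :=
  RTree.node (Sum.inr G.start) (fun i => False.elim (by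
    have h : i.val < G.rkN G.start := i.isLt
    rw [G.start_rank] at h
    exact Nat.not_lt_zero _ h))

/-- A tree language is algebraic (context-free) if it is generated by a
context-free tree grammar. -/
def IsAlgebraicTreeLang {S V : Type} {rkS : S → ℕ} (L : Set (RTree S V rkS)) : Prop :=
  ∃ G : CFTG S V rkS,
    L = { t | Relation.ReflTransGen G.Rw G.startTree (embedCFT (N := G.N) (rkN := G.rkN) t) }

/-- The ranked alphabet `{f/2, e/0}`, encoded with `f = 0` and `e = 1`. -/
def rk18 : Fin 2 → ℕ := ![2, 0]

/-- The input tree `f(v₁, v₂)` over the leaf alphabet `V = {v₁, v₂}` (encoded `Fin 2`). -/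
def t18 : RTree (Fin 2) (Fin 2) rk18 :=
  RTree.node 0 ![RTree.leaf 0, RTree.leaf 1]

/-- The output tree `e` (a tree without leaf symbols). -/
def e18 : RTree (Fin 2) Empty rk18 :=
  RTree.node 1 ![]

/-- A tree that becomes `e` under a substitution contains at most one variable, so over two
variable indices, one of them does not occur. -/
theorem exists_index_not_mem_of_subst_eq_e18 {Q : Type}
    (r : RTree (Fin 2) (Empty ⊕ (Q × Fin 2)) rk18)
    (σ : Q × Fin 2 → RTree (Fin 2) Empty rk18) (h : r.subst σ = e18) :
    ∃ j : Fin 2, ∀ p ∈ r.ivars, p.2 ≠ j := by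
  match r, h with
  | .leaf (Sum.inl y), _ => exact y.elim
  | .leaf (Sum.inr (q, i)), _ =>
    refine ⟨1 - i, fun p hp => ?_⟩
    obtain rfl : p = (q, i) := by simpa [RTree.ivars] using hp
    change i ≠ 1 - i
    lia
  | .node g c, h =>
    simp only [RTree.subst, e18] at h
    injection h with hg _
    subst hg
    refine ⟨0, fun p hp => ?_⟩
    rw [RTree.ivars, Multiset.mem_sum] at hp
    obtain ⟨i, -, -⟩ := hp
    exact Fin.elim0 i

/-- If a transducer without look-ahead translates `f(c₀, c₁)` to `e`, then one of the two subtrees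
can be replaced by any other tree. -/
theorem TDTT.Run.exists_unvisited (M : TDTT (Fin 2) (Fin 2) rk18 (Fin 2) Empty rk18)
    (hM : M.NoLookahead) {q : M.Q} {t : RTree (Fin 2) (Fin 2) rk18}
    {u : RTree (Fin 2) Empty rk18} (h : M.Run q t u) (hu : u = e18)
    (c : Fin 2 → RTree (Fin 2) (Fin 2) rk18) (ht : t = RTree.node 0 c) :
    ∃ j : Fin 2, ∀ c' : Fin 2 → RTree (Fin 2) (Fin 2) rk18, (∀ i, i ≠ j → c' i = c i) →
      M.Run q (RTree.node 0 c') e18 := by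
  cases h with
  | leaf _ _ => cases ht
  | @node r d σ hr _ hrun =>
    obtain ⟨st, sym, rhs, la⟩ := r
    dsimp only at *
    injection ht with hs hd
    subst hs
    obtain rfl := eq_of_heq hd
    obtain ⟨j, hj⟩ := exists_index_not_mem_of_subst_eq_e18 rhs σ hu
    refine ⟨j, fun c' hc' => ?_⟩
    rw [← hu]
    refine TDTT.Run.node (r := ⟨st, 0, rhs, la⟩) (c := c') σ hr ?_ ?_
    · have := hM.1 _ hr
      dsimp only at this
      simp [this]
    · intro p hp
      have := hrun p hp
      rwa [← hc' p.2 (hj p hp)] at this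

/-- The singleton relation is defined by a bimorphism with a single nullary center symbol. -/
theorem isQARel_t18_e18 :
    IsQARel ({(t18, e18)} : Set (RTree (Fin 2) (Fin 2) rk18 × RTree (Fin 2) Empty rk18)) := by
  let φ : TreeHom Unit Empty (fun _ => 0) (Fin 2) (Fin 2) rk18 :=
    ⟨Empty.elim, fun _ => .node 0 ![.leaf (Sum.inl 0), .leaf (Sum.inl 1)]⟩
  let ψ : TreeHom Unit Empty (fun _ => 0) (Fin 2) Empty rk18 :=
    ⟨Empty.elim, fun _ => .node 1 ![]⟩
  have hφ (c) : φ.apply (.node () c) = t18 := by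
    simp only [TreeHom.apply, φ, RTree.subst, t18]
    congr 1
    funext i
    change Fin 2 at i
    fin_cases i <;> rfl
  have hψ (c) : ψ.apply (.node () c) = e18 := by
    simp only [TreeHom.apply, ψ, RTree.subst, e18]
    congr 1
    funext i
    exact Fin.elim0 i
  refine ⟨Unit, Empty, fun _ => 0, inferInstance, inferInstance, φ, ψ, Set.univ,
    ⟨fun _ => ?_, fun _ i => i.elim0, fun v => v.elim, fun _ i => ?_⟩,
    ⟨fun _ => ?_, fun _ i => i.elim0, fun v => v.elim, fun _ i => Fin.elim0 i⟩, ?_, ?_⟩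
  · exact Multiset.nodup_iff_count_le_one.2 fun i => i.elim0
  · change Fin 2 at i
    fin_cases i
    · exact ⟨_, rfl⟩
    · exact ⟨_, rfl⟩
  · exact Multiset.nodup_iff_count_le_one.2 fun i => i.elim0
  · refine ⟨⟨Unit, Set.univ, fun _ _ => True, fun _ _ _ => True⟩, ?_⟩
    symm
    refine Set.eq_univ_of_forall fun t => ⟨(), trivial, ?_⟩
    cases t with
    | leaf v => exact v.elim
    | node f c => exact .node (qs := fun _ => ()) trivial fun i => i.elim0
  · ext p
    constructor
    · rintro rfl
      exact ⟨.node () Fin.elim0, trivial, by rw [hφ, hψ]⟩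
    · rintro ⟨t, -, rfl⟩
      cases t with
      | leaf v => exact v.elim
      | node f c => rw [hφ, hψ]; rfl

/-- `B(qaH, Rec, qaH) ⊄ l-TOP`: with `Σ = {f/2, e/0}` and
`V = {v₁, v₂}`, the single-pair relation `{(f(v₁,v₂), e)}` is a quasi-alphabetic
relation, but it is not computed by any linear top-down tree transducer
(without look-ahead). -/
theorem isQARel_not_subset_linear_top :
    IsQARel ({((t18, e18))} : Set (RTree (Fin 2) (Fin 2) rk18 × RTree (Fin 2) Empty rk18)) ∧
    ∀ M : TDTT (Fin 2) (Fin 2) rk18 (Fin 2) Empty rk18,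
      M.Linear → M.NoLookahead → M.rel ≠ {(t18, e18)} := by
  refine ⟨isQARel_t18_e18, fun M _ hM hrel => ?_⟩
  obtain ⟨q, hq, hrun⟩ : (t18, e18) ∈ M.rel := by rw [hrel]; rfl
  obtain ⟨j, hj⟩ := hrun.exists_unvisited M hM rfl ![.leaf 0, .leaf 1] rfl
  -- The subtree `e` differs from both leaves, so placing it at `j` yields a different input tree.
  let c' := Function.update ![.leaf 0, .leaf 1] j (.node 1 ![] : RTree (Fin 2) (Fin 2) rk18)
  have hmem : (RTree.node 0 c', e18) ∈ M.rel :=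
    ⟨q, hq, hj c' fun i hi => Function.update_of_ne hi _ _⟩
  rw [hrel] at hmem
  have h : RTree.node 0 c' = t18 := congrArg Prod.fst hmem
  injection h with _ hc
  have hcj := congrFun hc j
  simp only [c', Function.update_self] at hcj
  fin_cases j <;> cases hcj
end

section
/- QREL ⊊ B(saH, Rec, saH): the class of transformations computed by finite-state relabelings is strictly included in the class of strictly alphabetic relations; in particular, QREL is closed under intersection while B(saH, Rec, saH) is not. -/
/-!
A relabeling with state set `Q` is the same thing as a tree automaton over the alphabet of
pairs `(f, g)` of symbols of equal rank, and the two projections of that alphabet are strictly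
alphabetic homomorphisms (`relabeling_inBim`). Relabelings are closed under intersection by
the usual product construction (`relabeling_inter`).

Strictly alphabetic homomorphisms may permute subtrees. Over one binary symbol, let `τ₁` be the
identity and `τ₂` the graph of the mirror map `m`, both defined by bimorphisms whose center
language consists of all trees. Then `τ₁ ∩ τ₂` is the identity on the trees `s` with `s = m s`,
and this is not a strictly alphabetic relation (`not_inBim_inter`): for each of the infinitely many
trees `t`, the symmetric tree `(t, m t)` is the image of an accepted center tree, so by the
pigeonhole principle two distinct `t`, `t'` use the same root symbol and the same states at its
children. Exchanging one child yields `(t, m t')` in the domain, hence `t = t'`.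

Strictness of the inclusion follows: were `τ₁` and `τ₂` both computed by relabelings, so would be
`τ₁ ∩ τ₂`, which would then be a strictly alphabetic relation.
-/

set_option autoImplicit false

/-- The homomorphism relabeling leaves by `z` and symbols by `g`, and permuting the
subtrees below each symbol `σ` according to `e σ`. -/
def relHom {G Z D Y : Type} {rkG : G → ℕ} {rkD : D → ℕ} (z : Z → Y) (g : G → D)
    (e : ∀ σ, Fin (rkD (g σ)) ≃ Fin (rkG σ)) : TreeHom G Z rkG D Y rkD where
  leafMap v := .leaf (z v)
  symMap σ := .node (g σ) fun i => .leaf (Sum.inr (e σ i))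

section RelHom

variable {G Z D Y : Type} {rkG : G → ℕ} {rkD : D → ℕ} (z : Z → Y) (g : G → D)
  (e : ∀ σ, Fin (rkD (g σ)) ≃ Fin (rkG σ))

theorem relHom_apply_leaf (v : Z) : (relHom z g e).apply (.leaf v) = .leaf (z v) := rfl

theorem relHom_apply_node (σ : G) (c : Fin (rkG σ) → RTree G Z rkG) :
    (relHom z g e).apply (.node σ c) =
      .node (g σ) fun i => (relHom z g e).apply (c (e σ i)) := rfl

theorem relHom_ivars (σ : G) :
    ((relHom z g e).symMap σ).ivars = (Finset.univ : Finset (Fin (rkG σ))).val := by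
  have h : ((relHom z g e).symMap σ).ivars = ∑ i, ({e σ i} : Multiset (Fin (rkG σ))) := rfl
  rw [h, Equiv.sum_comp (e σ) (fun i => ({i} : Multiset (Fin (rkG σ)))),
    Finset.sum_multiset_singleton]

theorem relHom_strictlyAlphabetic : (relHom z g e).StrictlyAlphabetic := by
  have hleaf : (relHom z g e).LeafToLeaf := fun v => ⟨z v, rfl⟩
  have hshallow : ∀ σ, ((relHom z g e).symMap σ).VarShallow := fun σ i => ⟨e σ i, rfl⟩
  refine ⟨fun σ i => ?_, ⟨fun σ => ?_, hleaf, fun σ => Or.inr (hshallow σ)⟩, hleaf, hshallow⟩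
  · rw [relHom_ivars]; exact Finset.mem_univ i
  · rw [relHom_ivars]; exact Finset.univ.nodup

end RelHom

/-- A strictly alphabetic homomorphism sends every center symbol to a single symbol applied
to pairwise distinct variables. -/
theorem strictlyAlphabetic_apply_node {G Z D Y : Type} {rkG : G → ℕ} {rkD : D → ℕ}
    {φ : TreeHom G Z rkG D Y rkD} (hφ : φ.StrictlyAlphabetic) (σ : G) :
    ∃ (f : D) (b : Fin (rkD f) → Fin (rkG σ)), Function.Injective b ∧
      ∀ c, φ.apply (.node σ c) = .node f fun i => φ.apply (c (b i)) := by
  obtain ⟨-, ⟨hlin, -, -⟩, -, hsh⟩ := hφ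
  have h1 := hlin σ
  have h2 := hsh σ
  rcases h : φ.symMap σ with v | ⟨f, c⟩
  · rw [h] at h2; exact h2.elim
  · rw [h] at h1 h2
    have h2' : ∀ i, ∃ b, c i = .leaf (Sum.inr b) := h2
    choose b hb using h2'
    obtain rfl : c = fun i => .leaf (Sum.inr (b i)) := funext hb
    refine ⟨f, b, ?_, fun d => ?_⟩
    · have h3 : (∑ i, ({b i} : Multiset (Fin (rkG σ)))).Nodup := h1
      have h4 : (∑ i, ({b i} : Multiset (Fin (rkG σ)))) = Finset.univ.val.map b := by
        rw [Finset.sum, ← Multiset.sum_map_singleton (Finset.univ.val.map b), Multiset.map_map]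
        rfl
      rw [h4] at h3
      intro i j hij
      exact Multiset.inj_on_of_nodup_map h3 i (Finset.mem_univ i) j (Finset.mem_univ j) hij
    · rw [TreeHom.apply, h]; rfl

/-! ### Relabelings as bimorphisms, and their intersection -/

section Relabelings

variable {S V D Y : Type} {rkS : S → ℕ} {rkD : D → ℕ}

theorem relabeling_inBim [Fintype S] [Fintype V] [Fintype D] [Fintype Y]
    (M : Relabeling S V rkS D Y rkD) : InBim saHC saHC M.rel := by
  classical
  let G : Type := {p : S × D // rkD p.2 = rkS p.1}
  let rkG : G → ℕ := fun p => rkS p.1.1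
  let φ : TreeHom G (V × Y) rkG S V rkS :=
    relHom Prod.fst (fun p => p.1.1) fun p => Equiv.refl _
  let ψ : TreeHom G (V × Y) rkG D Y rkD :=
    relHom Prod.snd (fun p => p.1.2) fun p => finCongr p.2
  let A : FTA G (V × Y) rkG :=
    { Q := M.Q
      finQ := M.finQ
      final := M.final
      leafTrans := fun q p => M.leafRule q p.1 p.2
      nodeTrans := fun q p qs => M.nodeRule q p.1.1 p.1.2 p.2 qs }
  -- Runs of `M` on `(s, u)` correspond to runs of `A` on center trees projecting to `s` and `u`.
  have run_of_reach : ∀ q t, A.Reach q t → M.Run q (φ.apply t) (ψ.apply t) := by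
    intro q t h
    induction h with
    | leaf h => exact Relabeling.Run.leaf h
    | @node q p qs c h _ ih => exact Relabeling.Run.node p.2 h ih
  have reach_of_run : ∀ q s u, M.Run q s u → ∃ t, A.Reach q t ∧ φ.apply t = s ∧ ψ.apply t = u := by
    intro q s u h
    induction h with
    | @leaf q v y h => exact ⟨.leaf (v, y), FTA.Reach.leaf h, rfl, rfl⟩
    | @node q f g hr qs c c' h _ ih =>
      choose t ht using ih
      refine ⟨.node ⟨(f, g), hr⟩ t, FTA.Reach.node (qs := qs) h fun i => (ht i).1, ?_, ?_⟩
      · exact congrArg (RTree.node f) (funext fun i => (ht i).2.1)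
      · exact congrArg (RTree.node g) (funext fun i => (ht (Fin.cast hr i)).2.2)
  refine ⟨G, V × Y, rkG, inferInstance, inferInstance, φ, ψ, _, relHom_strictlyAlphabetic _ _ _,
    relHom_strictlyAlphabetic _ _ _, ⟨A, rfl⟩, ?_⟩
  ext ⟨s, u⟩
  constructor
  · rintro ⟨q, hq, h⟩
    obtain ⟨t, ht, rfl, rfl⟩ := reach_of_run q s u h
    exact ⟨t, ⟨q, hq, ht⟩, rfl⟩
  · rintro ⟨t, ⟨q, hq, ht⟩, h⟩
    obtain ⟨rfl, rfl⟩ := Prod.mk.inj h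
    exact ⟨q, hq, run_of_reach q t ht⟩

theorem relabeling_inter (M₁ M₂ : Relabeling S V rkS D Y rkD) :
    ∃ M : Relabeling S V rkS D Y rkD, M.rel = M₁.rel ∩ M₂.rel := by
  classical
  let M : Relabeling S V rkS D Y rkD :=
    { Q := M₁.Q × M₂.Q
      finQ := @instFintypeProd _ _ M₁.finQ M₂.finQ
      final := M₁.final ×ˢ M₂.final
      leafRule := fun q v y => M₁.leafRule q.1 v y ∧ M₂.leafRule q.2 v y
      nodeRule := fun q f g h qs => M₁.nodeRule q.1 f g h (fun i => (qs i).1) ∧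
        M₂.nodeRule q.2 f g h (fun i => (qs i).2) }
  have proj : ∀ q s u, M.Run q s u → M₁.Run q.1 s u ∧ M₂.Run q.2 s u := by
    intro q s u h
    induction h with
    | leaf h => exact ⟨.leaf h.1, .leaf h.2⟩
    | node hr h _ ih => exact ⟨.node hr h.1 fun i => (ih i).1, .node hr h.2 fun i => (ih i).2⟩
  have pair : ∀ q₁ s u, M₁.Run q₁ s u → ∀ q₂, M₂.Run q₂ s u → M.Run (q₁, q₂) s u := by
    intro q₁ s u h
    induction h with
    | leaf h =>
      intro q₂ h'
      cases h' with
      | leaf h' => exact Relabeling.Run.leaf ⟨h, h'⟩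
    | @node q f g hr qs c c' h _ ih =>
      intro q₂ h'
      cases h' with
      | @node _ _ _ _ qs' _ _ h' hc' =>
        exact Relabeling.Run.node (qs := fun i => (qs i, qs' i)) hr ⟨h, h'⟩
          fun i => ih i _ (hc' i)
  refine ⟨M, ?_⟩
  ext ⟨s, u⟩
  constructor
  · rintro ⟨q, hq, h⟩
    exact ⟨⟨q.1, hq.1, (proj q s u h).1⟩, ⟨q.2, hq.2, (proj q s u h).2⟩⟩
  · rintro ⟨⟨q₁, hq₁, h₁⟩, ⟨q₂, hq₂, h₂⟩⟩
    exact ⟨(q₁, q₂), ⟨hq₁, hq₂⟩, pair q₁ s u h₁ q₂ h₂⟩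

end Relabelings

/-! ### Two strictly alphabetic relations on binary trees -/

/-- Unlabeled binary trees: one symbol of rank `2` and one leaf. -/
abbrev BinTree : Type := RTree Unit Unit (fun _ => 2)

/-- The homomorphism on binary trees that permutes the two subtrees of each node by `π`. -/
def permHom (π : Equiv.Perm (Fin 2)) :
    TreeHom Unit Unit (fun _ => 2) Unit Unit (fun _ => 2) :=
  relHom id id fun _ => π

/-- The mirror image of a binary tree. -/
def mirror (t : BinTree) : BinTree := (permHom Fin.revPerm).apply t

theorem mirror_node (c : Fin 2 → BinTree) :
    mirror (.node () c) = .node () fun i => mirror (c i.rev) := rfl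

theorem mirror_mirror (t : BinTree) : mirror (mirror t) = t := by
  induction t with
  | leaf v => rfl
  | node f c ih =>
    rw [mirror_node, mirror_node]
    exact congrArg (RTree.node ()) (funext fun i => by rw [Fin.rev_rev, ih])

theorem permHom_one_apply (t : BinTree) : (permHom 1).apply t = t := by
  induction t with
  | leaf v => rfl
  | node f c ih => exact congrArg (RTree.node ()) (funext fun i => ih i)

/-- The graph of the map `permHom π` on all binary trees. -/
def permRel (π : Equiv.Perm (Fin 2)) : Set (BinTree × BinTree) :=
  {p | p.2 = (permHom π).apply p.1}

theorem permRel_inBim (π : Equiv.Perm (Fin 2)) : InBim saHC saHC (permRel π) := by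
  let A : FTA Unit Unit (fun _ => 2) :=
    { Q := Unit
      final := Set.univ
      leafTrans := fun _ _ => True
      nodeTrans := fun _ _ _ => True }
  have hA : ∀ t : BinTree, A.Reach () t := by
    intro t
    induction t with
    | leaf v => exact FTA.Reach.leaf trivial
    | node f c ih => exact FTA.Reach.node (qs := fun _ => ()) trivial ih
  refine ⟨Unit, Unit, fun _ => 2, inferInstance, inferInstance, permHom 1, permHom π, Set.univ,
    relHom_strictlyAlphabetic _ _ _, relHom_strictlyAlphabetic _ _ _,
    ⟨A, (Set.eq_univ_of_forall fun t : BinTree =>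
      (⟨(), trivial, hA t⟩ : ∃ q ∈ A.final, A.Reach q t)).symm⟩, ?_⟩
  ext ⟨s, u⟩
  constructor
  · intro h
    exact ⟨s, trivial, Prod.ext (permHom_one_apply s).symm h⟩
  · rintro ⟨t, -, h⟩
    obtain ⟨rfl, rfl⟩ := Prod.mk.inj h
    rw [permHom_one_apply]
    exact rfl

theorem mem_inter_iff (s u : BinTree) :
    (s, u) ∈ permRel 1 ∩ permRel Fin.revPerm ↔ u = s ∧ u = mirror s := by
  have h : (s, u) ∈ permRel 1 ↔ u = s := by
    rw [permRel, Set.mem_ofPred_eq, permHom_one_apply]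
  exact and_congr h Iff.rfl

instance binTree_infinite : Infinite BinTree := by
  -- `t ↦ (t, t)` is injective and misses the leaf.
  refine ⟨fun hfin => ?_⟩
  have hinj : Function.Injective (fun t : BinTree => (RTree.node () fun _ => t : BinTree)) := by
    intro t t' h
    have h' := congrFun (RTree.node.inj h).2.eq 0
    exact h'
  obtain ⟨t, ht⟩ := Finite.injective_iff_surjective.mp hinj (.leaf ())
  cases ht

theorem not_inBim_inter : ¬ InBim saHC saHC (permRel 1 ∩ permRel Fin.revPerm) := by
  rintro ⟨G, Z, rkG, hG, hZ, φ, ψ, L, hφ, -, ⟨A, hA⟩, hτ⟩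
  have : Fintype A.Q := A.finQ
  -- Each symmetric tree `(t, m t)` comes from an accepted center tree, whose root is a node
  -- because leaves are mapped to leaves.
  have key : ∀ t : BinTree, ∃ (x : Σ σ : G, (Fin (rkG σ) → A.Q)) (c : Fin (rkG x.1) → RTree G Z rkG),
      (∃ q ∈ A.final, A.nodeTrans q x.1 x.2) ∧ (∀ i, A.Reach (x.2 i) (c i)) ∧
      φ.apply (.node x.1 c) = .node () ![t, mirror t] := by
    intro t
    have hmem : ((.node () ![t, mirror t], .node () ![t, mirror t]) : BinTree × BinTree) ∈
        permRel 1 ∩ permRel Fin.revPerm := by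
      rw [mem_inter_iff]
      refine ⟨rfl, ?_⟩
      rw [mirror_node]
      refine congrArg (RTree.node ()) (funext fun i => ?_)
      fin_cases i
      · exact (mirror_mirror t).symm
      · rfl
    rw [hτ] at hmem
    obtain ⟨w, hw, hpair⟩ := hmem
    rw [hA] at hw
    obtain ⟨q, hq, hreach⟩ := hw
    have hφw := (Prod.mk.inj hpair).1
    cases hreach with
    | @leaf _ v _ =>
      obtain ⟨y, hy⟩ := hφ.2.2.1 v
      have h : φ.apply (.leaf v) = .leaf y := hy
      rw [h] at hφw
      cases hφw
    | @node _ σ qs c htr hc => exact ⟨⟨σ, qs⟩, c, ⟨q, hq, htr⟩, hc, hφw.symm⟩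
  choose x c hfin hreach hφc using key
  obtain ⟨t, t', hne, hx⟩ := Finite.exists_ne_map_eq_of_infinite x
  apply hne
  have hreach' := hreach t'
  have hφc' := hφc t'
  generalize c t' = d at hreach' hφc'
  generalize x t' = y at *
  subst hx
  obtain ⟨f, b, hb, happ⟩ := strictlyAlphabetic_apply_node hφ (x t).1
  have h01 : b 1 ≠ b 0 := fun h => absurd (hb h) (by decide)
  -- The first subtree of the image is taken from `t`, the second from `t'`.
  let e : Fin (rkG (x t).1) → RTree G Z rkG := fun i => if i = b 0 then c t i else d i
  obtain ⟨q, hq, htr⟩ := hfin t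
  have he : A.Reach q (.node (x t).1 e) := by
    refine FTA.Reach.node htr fun i => ?_
    by_cases hi : i = b 0
    · simpa only [e, if_pos hi] using hreach t i
    · simpa only [e, if_neg hi] using hreach' i
  have hmem : (φ.apply (.node (x t).1 e), ψ.apply (.node (x t).1 e)) ∈
      permRel 1 ∩ permRel Fin.revPerm := by
    rw [hτ]
    exact ⟨_, by rw [hA]; exact ⟨q, hq, he⟩, rfl⟩
  rw [mem_inter_iff] at hmem
  have hsym := hmem.1.symm.trans hmem.2
  have ht : φ.apply (c t (b 0)) = t :=
    congrFun (RTree.node.inj ((happ (c t)).symm.trans (hφc t))).2.eq 0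
  have ht' : φ.apply (d (b 1)) = mirror t' :=
    congrFun (RTree.node.inj ((happ d).symm.trans hφc')).2.eq 1
  rw [happ, mirror_node] at hsym
  have h0 : φ.apply (e (b 0)) = mirror (φ.apply (e (b 1))) :=
    congrFun (RTree.node.inj hsym).2.eq 0
  simp only [e, if_true, if_neg h01, ht, ht', mirror_mirror] at h0
  exact h0

/-- `QREL ⊊ B(saH, Rec, saH)`: the transformations computed by
finite-state relabelings are strictly included in the strictly alphabetic relations;
in particular, `QREL` is closed under intersection whereas `B(saH, Rec, saH)` is not. -/
theorem qrel_strictly_included_in_saH_bimorphisms :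
    (∀ (S V : Type) (rkS : S → ℕ) (D Y : Type) (rkD : D → ℕ)
      [Fintype S] [Fintype V] [Fintype D] [Fintype Y]
      (M : Relabeling S V rkS D Y rkD), InBim saHC saHC M.rel) ∧
    (∃ (S V : Type) (rkS : S → ℕ) (D Y : Type) (rkD : D → ℕ)
      (_ : Fintype S) (_ : Fintype V) (_ : Fintype D) (_ : Fintype Y)
      (τ : Set (RTree S V rkS × RTree D Y rkD)),
      InBim saHC saHC τ ∧ ∀ M : Relabeling S V rkS D Y rkD, M.rel ≠ τ) ∧
    (∀ (S V : Type) (rkS : S → ℕ) (D Y : Type) (rkD : D → ℕ)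
      [Fintype S] [Fintype V] [Fintype D] [Fintype Y]
      (M₁ M₂ : Relabeling S V rkS D Y rkD),
      ∃ M : Relabeling S V rkS D Y rkD, M.rel = M₁.rel ∩ M₂.rel) ∧
    (∃ (S V : Type) (rkS : S → ℕ) (D Y : Type) (rkD : D → ℕ)
      (_ : Fintype S) (_ : Fintype V) (_ : Fintype D) (_ : Fintype Y)
      (τ₁ τ₂ : Set (RTree S V rkS × RTree D Y rkD)),
      InBim saHC saHC τ₁ ∧ InBim saHC saHC τ₂ ∧ ¬ InBim saHC saHC (τ₁ ∩ τ₂)) := by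
  classical
  refine ⟨fun S V rkS D Y rkD _ _ _ _ M => relabeling_inBim M, ?_,
    fun S V rkS D Y rkD _ _ _ _ M₁ M₂ => relabeling_inter M₁ M₂,
    Unit, Unit, _, Unit, Unit, _, inferInstance, inferInstance, inferInstance, inferInstance,
    permRel 1, permRel Fin.revPerm, permRel_inBim _, permRel_inBim _, not_inBim_inter⟩
  by_contra hcon
  have hrel : ∀ π, ∃ M : Relabeling Unit Unit (fun _ => 2) Unit Unit (fun _ => 2),
      M.rel = permRel π := by
    intro π
    by_contra hM
    exact hcon ⟨Unit, Unit, _, Unit, Unit, _, inferInstance, inferInstance, inferInstance,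
      inferInstance, permRel π, permRel_inBim π, fun M h => hM ⟨M, h⟩⟩
  obtain ⟨M₁, h₁⟩ := hrel 1
  obtain ⟨M₂, h₂⟩ := hrel Fin.revPerm
  obtain ⟨M, hM⟩ := relabeling_inter M₁ M₂
  rw [h₁, h₂] at hM
  exact not_inBim_inter (hM ▸ relabeling_inBim M)
end
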